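/- Let J ∈ L¹(ℝ) be nonnegative and even with ∫_ℝ J(x) dx = 1 and ∫_ℝ x² J(x) dx < ∞. Let w : ℝ → ℝ be bounded and twice continuously differentiable with bounded first derivative and with w″ ∈ L¹(ℝ). Then J*w − w ∈ L¹(ℝ) and ‖J*w − w‖_{L¹(ℝ)} ≤ (1/2) (∫_ℝ y² J(y) dy) ‖w″‖_{L¹(ℝ)}. -/

import Mathlib

open MeasureTheory

/-!
Taylor's formula with integral remainder turns the error `J * w - w`, up to the moments of `J` of
order at most one, into an average of translates of `w''`:
`∫∫ y² J(y) (1 - t) w''(x - t y) dt dy`. Translations preserve the `L¹` norm, so the error has `L¹`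
norm at most the total mass of the weight, `∫ y² |J(y)| dy * ∫₀¹ (1 - t) dt`, times `‖w''‖₁`. The
integrability of `y ↦ J(y) w(x - y)` for almost every `x` also comes out of Fubini's theorem for the
remainder. The same argument works at every order of the Taylor expansion.
-/

open scoped Nat

section AveragedTranslates

variable {α G E : Type*} [MeasurableSpace α] [AddGroup G] [MeasurableSpace G] [MeasurableAdd G]
  [MeasurableSub₂ G] [NormedAddCommGroup E] [NormedSpace ℝ E] {ν : Measure α} [SFinite ν]
  {μ : Measure G} [SFinite μ] [μ.IsAddRightInvariant] {s : α → G} {g : α → ℝ} {h : G → E}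

lemma measurePreserving_prod_sub_comp (hs : Measurable s) :
    MeasurePreserving (fun p : α × G => (p.1, p.2 - s p.1)) (ν.prod μ) (ν.prod μ) :=
  (MeasurePreserving.id ν).skew_product (measurable_snd.sub (hs.comp measurable_fst))
    (.of_forall fun a => (measurePreserving_sub_right μ (s a)).map_eq)

lemma integrable_prod_smul_translate (hs : Measurable s) (hg : Integrable g ν)
    (hh : Integrable h μ) :
    Integrable (fun p : α × G => g p.1 • h (p.2 - s p.1)) (ν.prod μ) :=
  (measurePreserving_prod_sub_comp hs).integrable_comp_of_integrable (hg.smul_prod hh)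

lemma integral_norm_integral_smul_translate_le (hs : Measurable s) (hg : Integrable g ν)
    (hh : Integrable h μ) :
    ∫ x, ‖∫ a, g a • h (x - s a) ∂ν‖ ∂μ ≤ (∫ a, ‖g a‖ ∂ν) * ∫ x, ‖h x‖ ∂μ := by
  have hint := integrable_prod_smul_translate (μ := μ) hs hg hh
  calc ∫ x, ‖∫ a, g a • h (x - s a) ∂ν‖ ∂μ
      ≤ ∫ x, ∫ a, ‖g a • h (x - s a)‖ ∂ν ∂μ :=
        integral_mono hint.integral_prod_right.norm hint.norm.integral_prod_right
          fun x => norm_integral_le_integral_norm _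
    _ = ∫ a, ∫ x, ‖g a • h (x - s a)‖ ∂μ ∂ν := (integral_integral_swap hint.norm).symm
    _ = (∫ a, ‖g a‖ ∂ν) * ∫ x, ‖h x‖ ∂μ := by
        simp_rw [norm_smul, integral_const_mul, integral_sub_right_eq_self (fun x => ‖h x‖),
          integral_mul_const]

end AveragedTranslates

lemma integral_eq_zero_of_odd {G E : Type*} [AddGroup G] [MeasurableSpace G] [MeasurableNeg G]
    [NormedAddCommGroup E] [NormedSpace ℝ E] {μ : Measure G} [μ.IsNegInvariant] {f : G → E}
    (hf : f.Odd) : ∫ x, f x ∂μ = 0 := by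
  have hneg := integral_neg_eq_self f μ
  simp only [hf _, integral_neg] at hneg
  have : IsAddTorsionFree E := .of_isTorsionFree ℝ E
  exact self_eq_neg.mp hneg.symm

lemma pow_le_one_add_pow {R : Type*} [Semiring R] [LinearOrder R] [IsOrderedRing R] {a : R}
    (ha : 0 ≤ a) {k m : ℕ} (hkm : k ≤ m) : a ^ k ≤ 1 + a ^ m := by
  rcases le_total a 1 with h | h
  · exact (pow_le_one₀ ha h).trans (le_add_of_nonneg_right (pow_nonneg ha m))
  · exact (pow_le_pow_right₀ h hkm).trans (le_add_of_nonneg_left zero_le_one)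

lemma integrable_pow_mul_of_le {μ : Measure ℝ} {J : ℝ → ℝ} {k m : ℕ} (hkm : k ≤ m)
    (hJ : Integrable J μ) (hJm : Integrable (fun y => y ^ m * J y) μ) :
    Integrable (fun y => y ^ k * J y) μ := by
  refine (hJ.norm.add hJm.norm).mono' (by fun_prop) (.of_forall fun y => ?_)
  calc ‖y ^ k * J y‖ = |y| ^ k * |J y| := by simp
    _ ≤ (1 + |y| ^ m) * |J y| := by gcongr; exact pow_le_one_add_pow (abs_nonneg y) hkm
    _ = ‖J y‖ + ‖y ^ m * J y‖ := by
        simp only [norm_mul, norm_pow, Real.norm_eq_abs]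
        ring

lemma setIntegral_Ioc_norm_inv_factorial_mul_one_sub_pow (n : ℕ) :
    ∫ t in Set.Ioc (0 : ℝ) 1, ‖(n ! : ℝ)⁻¹ * (1 - t) ^ n‖ = ((n + 1)! : ℝ)⁻¹ := by
  calc ∫ t in Set.Ioc (0 : ℝ) 1, ‖(n ! : ℝ)⁻¹ * (1 - t) ^ n‖
      = ∫ t in Set.Ioc (0 : ℝ) 1, (n ! : ℝ)⁻¹ * (1 - t) ^ n :=
        setIntegral_congr_fun measurableSet_Ioc fun t ht =>
          Real.norm_of_nonneg (mul_nonneg (by positivity) (pow_nonneg (sub_nonneg.mpr ht.2) n))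
    _ = ∫ t in (0 : ℝ)..1, (n ! : ℝ)⁻¹ * (1 - t) ^ n :=
        (intervalIntegral.integral_of_le zero_le_one).symm
    _ = (n ! : ℝ)⁻¹ * ∫ t in (0 : ℝ)..1, t ^ n := by
        rw [intervalIntegral.integral_const_mul,
          intervalIntegral.integral_comp_sub_left (fun t => t ^ n)]
        norm_num
    _ = ((n + 1)! : ℝ)⁻¹ := by
        rw [integral_pow, Nat.factorial_succ]
        push_cast
        field_simp
        simp

section MomentExpansion

variable {E : Type*} [NormedAddCommGroup E] [NormedSpace ℝ E] {μ : Measure ℝ} {J : ℝ → ℝ}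
  {w : ℝ → E} {n : ℕ}

lemma sub_eq_sum_add_setIntegral_iteratedDeriv [CompleteSpace E] (hw : ContDiff ℝ (n + 1) w)
    (x y : ℝ) :
    w (x - y) = (∑ k ∈ Finset.range (n + 1), ((-y) ^ k / k !) • iteratedDeriv k w x) +
      ∫ t in Set.Ioc (0 : ℝ) 1,
        ((-y) ^ (n + 1) * ((n ! : ℝ)⁻¹ * (1 - t) ^ n)) • iteratedDeriv (n + 1) w (x - t * y) := by
  have taylor := map_add_eq_sum_add_integral_iteratedFDeriv (x := x) (y := -y)
    fun _ _ => hw.contDiffAt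
  rw [intervalIntegral.integral_of_le zero_le_one] at taylor
  simpa [iteratedFDeriv_apply_eq_iteratedDeriv_mul_prod, smul_smul, ← integral_smul,
    ← sub_eq_add_neg, div_eq_inv_mul, mul_comm, mul_left_comm] using taylor

/-- The weight, at `p = (y, t)`, of the translate `x ↦ w⁽ⁿ⁺¹⁾ (x - t * y)` in the integral form of
the Taylor remainder of order `n` of `J y • w (x - y)`. -/
noncomputable def taylorWeight (J : ℝ → ℝ) (n : ℕ) (p : ℝ × ℝ) : ℝ :=
  ((-p.1) ^ (n + 1) * J p.1) * ((n ! : ℝ)⁻¹ * (1 - p.2) ^ n)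

lemma integrable_taylorWeight (hJn : Integrable (fun y => y ^ (n + 1) * J y) μ) :
    Integrable (taylorWeight J n) (μ.prod (volume.restrict (Set.Ioc 0 1))) := by
  have hmoment : Integrable (fun y => (-y) ^ (n + 1) * J y) μ := by
    simpa only [← mul_assoc, ← neg_pow] using hJn.const_mul ((-1) ^ (n + 1))
  have hpow : IntegrableOn (fun t : ℝ => (n ! : ℝ)⁻¹ * (1 - t) ^ n) (Set.Ioc 0 1) :=
    Continuous.integrableOn_Ioc (by fun_prop)
  exact hmoment.mul_prod hpow

lemma integral_norm_taylorWeight [SFinite μ] :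
    ∫ p, ‖taylorWeight J n p‖ ∂μ.prod (volume.restrict (Set.Ioc 0 1)) =
      ((n + 1)! : ℝ)⁻¹ * ∫ y, |y ^ (n + 1) * J y| ∂μ := by
  simp_rw [taylorWeight, norm_mul (_ * _)]
  rw [integral_prod_mul (fun y => ‖(-y) ^ (n + 1) * J y‖) fun t => ‖(n ! : ℝ)⁻¹ * (1 - t) ^ n‖,
    setIntegral_Ioc_norm_inv_factorial_mul_one_sub_pow, mul_comm]
  simp [abs_mul]

lemma smul_sub_eq_sum_add_setIntegral_taylorWeight [CompleteSpace E] (hw : ContDiff ℝ (n + 1) w)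
    (x y : ℝ) :
    J y • w (x - y) =
      (∑ k ∈ Finset.range (n + 1), ((-1) ^ k / k ! * (y ^ k * J y)) • iteratedDeriv k w x) +
        ∫ t in Set.Ioc (0 : ℝ) 1,
          taylorWeight J n (y, t) • iteratedDeriv (n + 1) w (x - t * y) := by
  rw [sub_eq_sum_add_setIntegral_iteratedDeriv hw, smul_add, Finset.smul_sum, ← integral_smul]
  simp_rw [smul_smul, taylorWeight, ← mul_assoc, mul_comm (J y)]
  congr 1
  refine Finset.sum_congr rfl fun k _ => ?_
  rw [neg_pow]
  ring_nf

/-- The error of the moment expansion of order `n` of the convolution of `J μ` and `w`, namely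
`(J μ * w) x - ∑ k ≤ n, (-1) ^ k / k! * m_k * w⁽ᵏ⁾ x`, where `m_k` is the `k`-th moment of `J μ`. -/
noncomputable def momentExpansionError (μ : Measure ℝ) (J : ℝ → ℝ) (w : ℝ → E) (n : ℕ) (x : ℝ) :
    E :=
  (∫ y, J y • w (x - y) ∂μ) -
    ∑ k ∈ Finset.range (n + 1), ((-1) ^ k / k ! * ∫ y, y ^ k * J y ∂μ) • iteratedDeriv k w x

lemma momentExpansionError_one_of_even [μ.IsNegInvariant] (hJ : J.Even) :
    momentExpansionError μ J w 1 =
      fun x => (∫ y, J y • w (x - y) ∂μ) - (∫ y, J y ∂μ) • w x := by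
  have hodd : ∫ y, y * J y ∂μ = 0 := integral_eq_zero_of_odd fun y => by rw [hJ, neg_mul]
  ext x
  simp [momentExpansionError, Finset.sum_range_succ, hodd]

lemma momentExpansionError_ae_eq [CompleteSpace E] [SFinite μ] (hJ : Integrable J μ)
    (hJn : Integrable (fun y => y ^ (n + 1) * J y) μ) (hw : ContDiff ℝ (n + 1) w)
    (hwn : Integrable (iteratedDeriv (n + 1) w)) :
    momentExpansionError μ J w n =ᵐ[volume] fun x =>
      ∫ p : ℝ × ℝ, taylorWeight J n p • iteratedDeriv (n + 1) w (x - p.2 * p.1)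
        ∂μ.prod (volume.restrict (Set.Ioc 0 1)) := by
  have hint := integrable_prod_smul_translate (s := fun p : ℝ × ℝ => p.2 * p.1) (by fun_prop)
    (integrable_taylorWeight hJn) hwn
  filter_upwards [hint.prod_left_ae] with x hx
  have hterm : ∀ k ∈ Finset.range (n + 1), Integrable (fun y =>
      ((-1) ^ k / k ! * (y ^ k * J y)) • iteratedDeriv k w x) μ := fun k hk =>
    ((integrable_pow_mul_of_le (Finset.mem_range.mp hk).le hJ hJn).const_mul _).smul_const _
  rw [momentExpansionError, integral_prod _ hx]
  simp_rw [smul_sub_eq_sum_add_setIntegral_taylorWeight hw x]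
  rw [integral_add (integrable_finsetSum _ hterm) hx.integral_prod_left,
    integral_finsetSum _ hterm]
  simp_rw [integral_smul_const, integral_const_mul]
  rw [add_sub_cancel_left]

theorem stmt15_general [CompleteSpace E] [SFinite μ] (hJ : Integrable J μ)
    (hJn : Integrable (fun y => y ^ (n + 1) * J y) μ) (hw : ContDiff ℝ (n + 1) w)
    (hwn : Integrable (iteratedDeriv (n + 1) w)) :
    Integrable (momentExpansionError μ J w n) ∧
      ∫ x, ‖momentExpansionError μ J w n x‖ ≤
        ((n + 1)! : ℝ)⁻¹ * (∫ y, |y ^ (n + 1) * J y| ∂μ) * ∫ x, ‖iteratedDeriv (n + 1) w x‖ := by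
  have hs : Measurable fun p : ℝ × ℝ => p.2 * p.1 := by fun_prop
  have hg := integrable_taylorWeight hJn
  have herror := momentExpansionError_ae_eq hJ hJn hw hwn
  refine ⟨(integrable_prod_smul_translate hs hg hwn).integral_prod_right.congr herror.symm, ?_⟩
  calc ∫ x, ‖momentExpansionError μ J w n x‖
      = ∫ x, ‖∫ p, taylorWeight J n p • iteratedDeriv (n + 1) w (x - p.2 * p.1)
          ∂μ.prod (volume.restrict (Set.Ioc 0 1))‖ := integral_congr_ae (herror.fun_comp norm)
    _ ≤ _ := integral_norm_integral_smul_translate_le hs hg hwn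
    _ = _ := by rw [integral_norm_taylorWeight]

end MomentExpansion

/-- If `J ∈ L¹(ℝ)` is nonnegative, even, of unit mass and with finite second
moment, and `w` is bounded and `C²` with bounded first derivative and `w'' ∈ L¹(ℝ)`, then
`J*w - w ∈ L¹(ℝ)` and `‖J*w - w‖₁ ≤ (1/2)(∫ y² J(y) dy) ‖w''‖₁`. -/
theorem stmt15 (J : ℝ → ℝ) (hJint : Integrable J) (hJpos : ∀ x, 0 ≤ J x)
    (hJeven : ∀ x, J (-x) = J x) (hJ1 : (∫ x, J x) = 1)
    (hJ2 : Integrable (fun x => x ^ 2 * J x))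
    (w : ℝ → ℝ) (hw : ContDiff ℝ 2 w)
    (hwb : ∃ M, ∀ x, |w x| ≤ M) (hwb' : ∃ M, ∀ x, |deriv w x| ≤ M)
    (hw'' : Integrable (iteratedDeriv 2 w)) :
    Integrable (fun x => (∫ y, J y * w (x - y)) - w x) ∧
      (∫ x, |(∫ y, J y * w (x - y)) - w x|)
        ≤ (1 / 2) * (∫ y, y ^ 2 * J y) * ∫ x, |iteratedDeriv 2 w x| := by
  simpa [momentExpansionError_one_of_even hJeven, hJ1, abs_mul, abs_of_nonneg (hJpos _)]
    using stmt15_general (n := 1) hJint hJ2 hw hw''
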